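/- Let D ⊊ ℝⁿ be a domain with C-uniformly perfect boundary (Euclidean metric), η : [0,∞) → [0,∞) a homeomorphism, and f : cl(D) → cl(D) an η-quasisymmetric homeomorphism with f equal to the identity on ∂D. Then there is a constant C₁ = C₁(η, C) ≥ 1 (one may take C₁ = 4η(C) for the upper bound) such that for every x ∈ D and every x₀ ∈ ∂D with |x − x₀| = d(x), one has d(x)/C₁ ≤ d(f(x)) ≤ |f(x) − f(x₀)| ≤ C₁ d(x). -/

import Mathlib

/-!
Both bounds apply quasisymmetry, centred at a nearest boundary point `p` of some `y ∈ D`, to `x`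
and a second boundary point `w` with `d(y)/C ≤ |p - w| < d(y)`; here `y` is `x` or `f x`. Uniform
perfectness supplies `w`, since the spherical boundary always has a point outside `B(p, d(y))`:
if `D` is unbounded it is `∞`, otherwise the ray from `p` through `y` leaves `D` beyond `y`
(`exists_frontier_comparable`).

For the upper bound take `y = x` and `p = x₀`: as `|x - x₀| ≤ C |w - x₀|` and `f` fixes `x₀` and `w`,
`|f x - x₀| ≤ η(C) |w - x₀| ≤ η(C) d(x)`.

For the lower bound take `y = f x`, which lies in `D` because the injective map `f` fixes `∂D`, and
choose `s > 0` with `η(s) < 1/C`. If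
`|w - p| ≤ s |x - p|`, quasisymmetry would give
`d(f x)/C ≤ |w - p| ≤ η(s) |f x - p| < d(f x)/C`; hence
`d(x) ≤ |x - p| ≤ |w - p| / s ≤ d(f x) / s`.
-/


open Metric Filter Set Topology

noncomputable section

/-- Euclidean `n`-space. -/
abbrev Euc (n : ℕ) : Type := EuclideanSpace ℝ (Fin n)

/-- Distance from `x` to the (Euclidean) boundary of `D`. -/
def bdist {n : ℕ} (D : Set (Euc n)) (x : Euc n) : ℝ :=
  Metric.infDist x (frontier D)

/-- The distance ratio metric `j_D`. -/
def jDist {n : ℕ} (D : Set (Euc n)) (x y : Euc n) : ℝ :=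
  Real.log (1 + dist x y / min (bdist D x) (bdist D y))

/-- `γ` is a (differentiable) curve from `x` to `y` staying in `D`, parametrized on `[0,1]`. -/
def IsCurveIn {n : ℕ} (D : Set (Euc n)) (x y : Euc n) (γ : ℝ → Euc n) : Prop :=
  (∀ t : ℝ, DifferentiableAt ℝ γ t) ∧ γ 0 = x ∧ γ 1 = y ∧ ∀ t ∈ Set.Icc (0:ℝ) 1, γ t ∈ D

/-- The line integral `∫_γ ρ ds` of a density `ρ` along the curve `γ`. -/
def curveInt {n : ℕ} (ρ : Euc n → ℝ) (γ : ℝ → Euc n) : ℝ :=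
  ∫ t in (0:ℝ)..1, ρ (γ t) * ‖deriv γ t‖

/-- The quasihyperbolic distance `k_D`. -/
def qhDist {n : ℕ} (D : Set (Euc n)) (x y : Euc n) : ℝ :=
  sInf { L | ∃ γ : ℝ → Euc n, IsCurveIn D x y γ ∧
    L = curveInt (fun z => 1 / bdist D z) γ }

/-- Euclidean length of the piece of `γ` parametrized on `[a,b]`. -/
def eucLen {n : ℕ} (γ : ℝ → Euc n) (a b : ℝ) : ℝ := ∫ t in a..b, ‖deriv γ t‖

/-- The inner Euclidean metric of `D`. -/
def innerDist {n : ℕ} (D : Set (Euc n)) (x y : Euc n) : ℝ :=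
  sInf { L | ∃ γ : ℝ → Euc n, IsCurveIn D x y γ ∧ L = eucLen γ 0 1 }

/-- Control functions: (increasing) self-homeomorphisms `η : [0,∞) → [0,∞)`. -/
structure CtrlFun (η : ℝ → ℝ) : Prop where
  mono : StrictMonoOn η (Set.Ici 0)
  cont : ContinuousOn η (Set.Ici 0)
  zero : η 0 = 0
  surj : Set.SurjOn η (Set.Ici 0) (Set.Ici 0)

/-- `f` is a self-homeomorphism of the set `S`. -/
def HomeoOn {X : Type*} [TopologicalSpace X] (f : X → X) (S : Set X) : Prop :=
  Set.BijOn f S S ∧ ContinuousOn f S ∧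
    ∃ g : X → X, Set.InvOn g f S S ∧ Set.MapsTo g S S ∧ ContinuousOn g S

/-- The quasiconformality ratio `H_f(x,r)` of `f` at `x` at scale `r`. -/
def qcH {n : ℕ} (D : Set (Euc n)) (f : Euc n → Euc n) (x : Euc n) (r : ℝ) : ℝ :=
  sSup {d : ℝ | ∃ y ∈ D, dist x y = r ∧ d = dist (f x) (f y)} /
    sInf {d : ℝ | ∃ z ∈ D, dist x z = r ∧ d = dist (f x) (f z)}

/-- Metric definition of `K`-quasiconformality on a domain `D`. -/
def IsQCOn {n : ℕ} (D : Set (Euc n)) (f : Euc n → Euc n) (K : ℝ) : Prop :=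
  ∀ x ∈ D, Filter.limsup (qcH D f x) (𝓝[>] (0:ℝ)) ≤ K

/-- `C`-uniform perfectness of `S` with respect to the distance function `ρ`. -/
def UnifPerfectWith {β : Type*} (ρ : β → β → ℝ) (S : Set β) (C : ℝ) : Prop :=
  ∀ x ∈ S, ∀ r > 0, (∃ y ∈ S, r ≤ ρ x y) → ∃ y ∈ S, ρ x y < r ∧ r / C ≤ ρ x y

/-- `η`-quasisymmetry of `f` on `S`, from distance `ρX` to distance `ρY`. -/
def QSWith {α β : Type*} (ρX : α → α → ℝ) (ρY : β → β → ℝ) (S : Set α)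
    (f : α → β) (η : ℝ → ℝ) : Prop :=
  ∀ t > 0, ∀ x ∈ S, ∀ a ∈ S, ∀ b ∈ S,
    ρX x a ≤ t * ρX x b → ρY (f x) (f a) ≤ η t * ρY (f x) (f b)

/-- Cross ratio of a quadruple with respect to the distance function `ρ`. -/
def crossRatioWith {β : Type*} (ρ : β → β → ℝ) (a b c d : β) : ℝ :=
  (ρ a c * ρ b d) / (ρ a b * ρ c d)

/-- View a point of the one-point compactification as an `Option`. -/
def toOpt {n : ℕ} (a : OnePoint (Euc n)) : Option (Euc n) := a

/-- The chordal (spherical) metric on the Riemann sphere `ℝⁿ ∪ {∞}`. -/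
def chordal {n : ℕ} (a b : OnePoint (Euc n)) : ℝ :=
  Option.elim (toOpt a)
    (Option.elim (toOpt b) 0 fun y => 1 / Real.sqrt (1 + ‖y‖ ^ 2))
    fun x => Option.elim (toOpt b) (1 / Real.sqrt (1 + ‖x‖ ^ 2))
      fun y => dist x y / (Real.sqrt (1 + ‖x‖ ^ 2) * Real.sqrt (1 + ‖y‖ ^ 2))

/-- Closure of `D` in the Riemann sphere. -/
def sphClosure {n : ℕ} (D : Set (Euc n)) : Set (OnePoint (Euc n)) :=
  closure ((fun x : Euc n => (x : OnePoint (Euc n))) '' D)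

/-- Boundary of `D` in the Riemann sphere. -/
def sphFrontier {n : ℕ} (D : Set (Euc n)) : Set (OnePoint (Euc n)) :=
  frontier ((fun x : Euc n => (x : OnePoint (Euc n))) '' D)

/-- `C`-uniform perfectness, with respect to the Euclidean metric, of the boundary of `D`
taken in the Riemann sphere (the point `∞` counts as lying outside every Euclidean ball). -/
def sphPerfectEuc {n : ℕ} (D : Set (Euc n)) (C : ℝ) : Prop :=
  ∀ z : Euc n, (z : OnePoint (Euc n)) ∈ sphFrontier D → ∀ r > 0,
    (∃ w ∈ sphFrontier D, ∀ w' : Euc n, w = (w' : OnePoint (Euc n)) → r ≤ dist z w') →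
    ∃ w : Euc n, (w : OnePoint (Euc n)) ∈ sphFrontier D ∧ dist z w < r ∧ r / C ≤ dist z w

/-- Gromov product with respect to the quasihyperbolic metric of `D`, base point `w`. -/
def gprod {n : ℕ} (D : Set (Euc n)) (w x y : Euc n) : ℝ :=
  (qhDist D x w + qhDist D y w - qhDist D x y) / 2

/-- A Gromov sequence of `(D, k_D)`. -/
def GromovSeq {n : ℕ} (D : Set (Euc n)) (w : Euc n) (s : ℕ → Euc n) : Prop :=
  (∀ i, s i ∈ D) ∧
    Filter.Tendsto (fun p : ℕ × ℕ => gprod D w (s p.1) (s p.2)) Filter.atTop Filter.atTop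

/-- Equivalence of Gromov sequences. -/
def GromovEquiv {n : ℕ} (D : Set (Euc n)) (w : Euc n) (s t : ℕ → Euc n) : Prop :=
  Filter.Tendsto (fun i => gprod D w (s i) (t i)) Filter.atTop Filter.atTop

/-- The Gromov boundary of `(D, k_D)`: equivalence classes of Gromov sequences. -/
def GromovBoundary {n : ℕ} (D : Set (Euc n)) (w : Euc n) : Type :=
  Quot (fun s t : {u : ℕ → Euc n // GromovSeq D w u} => GromovEquiv D w s.1 t.1)

/-- `e^{-ε(ξ|ζ)_w}` for boundary points `ξ, ζ` (via representing sequences). -/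
def visRho {n : ℕ} (D : Set (Euc n)) (w : Euc n) (ε : ℝ) (ξ ζ : GromovBoundary D w) : ℝ :=
  sSup { r : ℝ | ∃ s t : {u : ℕ → Euc n // GromovSeq D w u},
    Quot.mk _ s = ξ ∧ Quot.mk _ t = ζ ∧
    r = Filter.limsup (fun i => Real.exp (-ε * gprod D w (s.1 i) (t.1 i))) Filter.atTop }

/-- The visual metric `d_{w,ε}` on the Gromov boundary (chain metric built from `visRho`). -/
def visDist {n : ℕ} (D : Set (Euc n)) (w : Euc n) (ε : ℝ) (ξ ζ : GromovBoundary D w) : ℝ :=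
  sInf { L : ℝ | ∃ (m : ℕ) (c : ℕ → GromovBoundary D w), 1 ≤ m ∧ c 0 = ξ ∧ c m = ζ ∧
    L = ∑ i ∈ Finset.range m, visRho D w ε (c i) (c (i + 1)) }

/-- `γ` is a quasihyperbolic geodesic from `x` to `y` in `D`. -/
def QHGeodesic {n : ℕ} (D : Set (Euc n)) (x y : Euc n) (γ : ℝ → Euc n) : Prop :=
  γ 0 = x ∧ γ (qhDist D x y) = y ∧ (∀ t ∈ Set.Icc 0 (qhDist D x y), γ t ∈ D) ∧
    ∀ s ∈ Set.Icc 0 (qhDist D x y), ∀ t ∈ Set.Icc 0 (qhDist D x y),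
      qhDist D (γ s) (γ t) = |s - t|

/-- `D` is a `δ`-hyperbolic domain: `(D, k_D)` is geodesic and has `δ`-thin triangles. -/
def GromovHypDomain {n : ℕ} (D : Set (Euc n)) (δ : ℝ) : Prop :=
  (∀ x ∈ D, ∀ y ∈ D, ∃ γ : ℝ → Euc n, QHGeodesic D x y γ) ∧
    ∀ x ∈ D, ∀ y ∈ D, ∀ z ∈ D, ∀ γ₁ γ₂ γ₃ : ℝ → Euc n,
      QHGeodesic D x y γ₁ → QHGeodesic D y z γ₂ → QHGeodesic D z x γ₃ →
      ∀ t ∈ Set.Icc 0 (qhDist D x y), ∃ s : ℝ,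
        (s ∈ Set.Icc 0 (qhDist D y z) ∧ qhDist D (γ₁ t) (γ₂ s) ≤ δ) ∨
        (s ∈ Set.Icc 0 (qhDist D z x) ∧ qhDist D (γ₁ t) (γ₃ s) ≤ δ)

/-- The Bonk–Heinonen–Koskela uniformization metric `d_ε` with base point `w`. -/
def bhkDist {n : ℕ} (D : Set (Euc n)) (w : Euc n) (ε : ℝ) (x y : Euc n) : ℝ :=
  sInf { L | ∃ γ : ℝ → Euc n, IsCurveIn D x y γ ∧
    L = curveInt (fun z => Real.exp (-ε * qhDist D z w) / bdist D z) γ }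

/-- A Cauchy sequence (with respect to the distance `ρ`) in `D` which does not converge to a
point of `D`; it represents a point of the metric boundary of `(D, ρ)`. -/
def BCauchyIn {α : Type*} (ρ : α → α → ℝ) (D : Set α) (s : ℕ → α) : Prop :=
  (∀ i, s i ∈ D) ∧ (∀ e > 0, ∃ N : ℕ, ∀ i ≥ N, ∀ j ≥ N, ρ (s i) (s j) < e) ∧
    ¬ ∃ p ∈ D, Filter.Tendsto (fun i => ρ (s i) p) Filter.atTop (nhds 0)

/-- Distance from `z` to the metric boundary of `(D, ρ)`. -/
def bdrySeqDist {α : Type*} (ρ : α → α → ℝ) (D : Set α) (z : α) : ℝ :=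
  sInf { r : ℝ | ∃ s : ℕ → α, BCauchyIn ρ D s ∧
    Filter.Tendsto (fun i => ρ z (s i)) Filter.atTop (nhds r) }

/-- The diameter of `(D, ρ)`. -/
def seqDiam {α : Type*} (ρ : α → α → ℝ) (D : Set α) : ℝ :=
  sSup { r : ℝ | ∃ x ∈ D, ∃ y ∈ D, r = ρ x y }

/-- The diameter of the metric boundary of `(D, ρ)`. -/
def bdryDiam {α : Type*} (ρ : α → α → ℝ) (D : Set α) : ℝ :=
  sSup { r : ℝ | ∃ s t : ℕ → α, BCauchyIn ρ D s ∧ BCauchyIn ρ D t ∧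
    Filter.Tendsto (fun i => ρ (s i) (t i)) Filter.atTop (nhds r) }

/-- `D` is an inner `A`-uniform domain. -/
def InnerUniform {n : ℕ} (D : Set (Euc n)) (A : ℝ) : Prop :=
  ∀ x ∈ D, ∀ y ∈ D, ∃ γ : ℝ → Euc n, IsCurveIn D x y γ ∧
    eucLen γ 0 1 ≤ A * innerDist D x y ∧
    ∀ t ∈ Set.Icc (0:ℝ) 1, min (eucLen γ 0 t) (eucLen γ t 1) ≤ A * bdist D (γ t)

/-- `(D, d_I)` is unbounded. -/
def InnerUnbounded {n : ℕ} (D : Set (Euc n)) : Prop :=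
  ¬ ∃ R : ℝ, ∀ x ∈ D, ∀ y ∈ D, innerDist D x y ≤ R

/-- `C`-uniform perfectness of the inner boundary `∂_I D` (points of the metric boundary of
`(D, d_I)` are represented by Cauchy sequences, and the point `∞` of `Ĥ(D)` counts as lying
outside every ball when `(D, d_I)` is unbounded). -/
def innerBdryPerfect {n : ℕ} (D : Set (Euc n)) (C : ℝ) : Prop :=
  ∀ s : ℕ → Euc n, BCauchyIn (innerDist D) D s → ∀ r > 0,
    ((∃ t : ℕ → Euc n, BCauchyIn (innerDist D) D t ∧
        r ≤ Filter.limsup (fun i => innerDist D (s i) (t i)) Filter.atTop) ∨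
      InnerUnbounded D) →
    ∃ t : ℕ → Euc n, BCauchyIn (innerDist D) D t ∧
      Filter.limsup (fun i => innerDist D (s i) (t i)) Filter.atTop < r ∧
      r / C ≤ Filter.limsup (fun i => innerDist D (s i) (t i)) Filter.atTop

/-! ### Quasihyperbolic geometry in a general metric space -/

/-- Metric speed (metric derivative) of a curve at time `t`. -/
def mSpeed {X : Type*} [MetricSpace X] (γ : ℝ → X) (t : ℝ) : ℝ :=
  Filter.limsup (fun h => dist (γ (t + h)) (γ t) / |h|) (𝓝[≠] (0:ℝ))

/-- Length of the piece of `γ` on `[a,b]`, in a metric space. -/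
def mLen {X : Type*} [MetricSpace X] (γ : ℝ → X) (a b : ℝ) : ℝ := ∫ t in a..b, mSpeed γ t

/-- `γ` is a rectifiable (Lipschitz) curve from `x` to `y` in `D`, in a metric space. -/
def mCurveIn {X : Type*} [MetricSpace X] (D : Set X) (x y : X) (γ : ℝ → X) : Prop :=
  (∃ K : NNReal, LipschitzWith K γ) ∧ γ 0 = x ∧ γ 1 = y ∧ ∀ t ∈ Set.Icc (0:ℝ) 1, γ t ∈ D

/-- Quasihyperbolic distance in a general metric space. -/
def mQhDist {X : Type*} [MetricSpace X] (D : Set X) (x y : X) : ℝ :=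
  sInf { L | ∃ γ : ℝ → X, mCurveIn D x y γ ∧
    L = ∫ t in (0:ℝ)..1, mSpeed γ t / Metric.infDist (γ t) (frontier D) }

/-- `D` is an `A`-uniform domain in a metric space. -/
def mUniform {X : Type*} [MetricSpace X] (D : Set X) (A : ℝ) : Prop :=
  ∀ x ∈ D, ∀ y ∈ D, ∃ γ : ℝ → X, mCurveIn D x y γ ∧ mLen γ 0 1 ≤ A * dist x y ∧
    ∀ t ∈ Set.Icc (0:ℝ) 1,
      min (mLen γ 0 t) (mLen γ t 1) ≤ A * Metric.infDist (γ t) (frontier D)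


/-- The finite part of the spherical boundary is the Euclidean boundary. -/
lemma coe_mem_sphFrontier {n : ℕ} (D : Set (Euc n)) (z : Euc n) :
    (z : OnePoint (Euc n)) ∈ sphFrontier D ↔ z ∈ frontier D := by
  have ho := (OnePoint.isOpenEmbedding_coe (X := Euc n)).isOpenMap
  have h := ho.preimage_frontier_eq_frontier_preimage
    OnePoint.continuous_coe ((fun x : Euc n => (x : OnePoint (Euc n))) '' D)
  have h2 : ((↑) : Euc n → OnePoint (Euc n)) ⁻¹' ((fun x : Euc n => (x : OnePoint (Euc n))) '' D)
      = D := Set.preimage_image_eq D OnePoint.coe_injective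
  rw [h2] at h
  rw [← h]
  rfl

lemma infty_mem_sphFrontier {n : ℕ} (D : Set (Euc n)) (hD : ¬ Bornology.IsBounded D) :
    (OnePoint.infty : OnePoint (Euc n)) ∈ sphFrontier D := by
  refine ⟨?_, fun h => ?_⟩
  · by_contra h
    have ho := (isClosed_closure (s := (fun x : Euc n => (x : OnePoint (Euc n))) '' D)).isOpen_compl
    rw [OnePoint.isOpen_iff_of_mem h] at ho
    refine hD (ho.2.isBounded.subset fun z hz => ?_)
    simpa using subset_closure (Set.mem_image_of_mem _ hz)
  · obtain ⟨z, -, hz⟩ := interior_subset h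
    exact OnePoint.coe_ne_infty z hz

/-- A ray starting in a bounded open set meets its boundary. -/
lemma exists_ray_frontier {n : ℕ} {D : Set (Euc n)} (hD : IsOpen D)
    (hb : Bornology.IsBounded D)
    {x v : Euc n} (hx : x ∈ D) (hv : v ≠ 0) : ∃ s : ℝ, 0 ≤ s ∧ x + s • v ∈ frontier D := by
  have hv' : 0 < ‖v‖ := norm_pos_iff.2 hv
  have hpre : IsPreconnected ((fun s : ℝ => x + s • v) '' Set.Ici 0) :=
    isPreconnected_Ici.image _ (by fun_prop)
  have h1 : (((fun s : ℝ => x + s • v) '' Set.Ici 0) ∩ D).Nonempty :=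
    ⟨x, ⟨0, Set.mem_Ici.2 le_rfl, by simp⟩, hx⟩
  have h2 : (((fun s : ℝ => x + s • v) '' Set.Ici 0) ∩ Dᶜ).Nonempty := by
    obtain ⟨R, hR⟩ := hb.subset_closedBall x
    refine ⟨x + ((|R| + 1) / ‖v‖) • v, ⟨_, Set.mem_Ici.2 (by positivity), rfl⟩, fun h => ?_⟩
    have h3 := hR h
    rw [Metric.mem_closedBall, dist_eq_norm, add_sub_cancel_left, norm_smul, Real.norm_eq_abs,
      abs_of_nonneg (by positivity), div_mul_cancel₀ _ hv'.ne'] at h3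
    linarith [le_abs_self R]
  by_contra! hno
  have hcov : ∀ z ∈ (fun s : ℝ => x + s • v) '' Set.Ici 0, z ∉ D → z ∈ (closure D)ᶜ := by
    rintro _ ⟨s, hs, rfl⟩ hz hz'
    exact hno s hs (hD.frontier_eq ▸ ⟨hz', hz⟩)
  obtain ⟨z, hz, hzD⟩ := h2
  obtain ⟨u, -, hu, hu'⟩ := hpre D (closure D)ᶜ hD isClosed_closure.isOpen_compl
    (fun z hz => or_iff_not_imp_left.2 (hcov z hz)) h1 ⟨z, hz, hcov z hz hzD⟩
  exact hu' (subset_closure hu)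

/-- At the scale of the distance from `y` to a boundary point `p`, uniform perfectness provides a
second boundary point. -/
lemma exists_frontier_comparable {n : ℕ} {D : Set (Euc n)} {C : ℝ} (hD : IsOpen D)
    (hP : sphPerfectEuc D C) {y p : Euc n} (hy : y ∈ D) (hp : p ∈ frontier D) :
    ∃ w ∈ frontier D, dist p w < dist y p ∧ dist y p / C ≤ dist p w := by
  have hne : y ≠ p := fun h => (hD.frontier_eq ▸ hp).2 (h ▸ hy)
  obtain ⟨w, hw, h⟩ := hP p ((coe_mem_sphFrontier D p).2 hp) _ (dist_pos.2 hne) (by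
    by_cases hb : Bornology.IsBounded D
    · obtain ⟨s, hs, hz⟩ := exists_ray_frontier hD hb hy (sub_ne_zero.2 hne)
      refine ⟨_, (coe_mem_sphFrontier D _).2 hz, fun w' hw' => ?_⟩
      rw [← OnePoint.coe_injective hw', dist_comm p, dist_eq_norm, dist_eq_norm,
        show y + s • (y - p) - p = (1 + s) • (y - p) by module, norm_smul, Real.norm_eq_abs,
        abs_of_nonneg (by linarith)]
      nlinarith [norm_nonneg (y - p)]
    · exact ⟨_, infty_mem_sphFrontier D hb, fun w' hw' =>
        absurd hw'.symm (OnePoint.coe_ne_infty w')⟩)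
  exact ⟨w, (coe_mem_sphFrontier D w).1 hw, h⟩

/-- Let `D ⊊ ℝⁿ` be a domain with `C`-uniformly perfect boundary (Euclidean
metric, boundary taken in the Riemann sphere), `η` a homeomorphism of `[0,∞)`, and
`f : cl(D) → cl(D)` an `η`-quasisymmetric homeomorphism which is the identity on `∂D`.
Then there is a constant `C₁ = C₁(η, C) ≥ 1` such that for every `x ∈ D` and every
`x₀ ∈ ∂D` with `|x − x₀| = d(x)`, one has
`d(x)/C₁ ≤ d(f(x)) ≤ |f(x) − f(x₀)| ≤ C₁ d(x)`. -/
theorem stmt3 (C : ℝ) (hC : 1 < C) (η : ℝ → ℝ) (hη : CtrlFun η) :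
    ∃ C₁ : ℝ, 1 ≤ C₁ ∧
      ∀ (n : ℕ) (D : Set (Euc n)), IsOpen D → IsConnected D → D ≠ Set.univ →
        sphPerfectEuc D C →
        ∀ f : Euc n → Euc n, HomeoOn f (closure D) →
          QSWith dist dist (closure D) f η → Set.EqOn f id (frontier D) →
          ∀ x ∈ D, ∀ x₀ ∈ frontier D, dist x x₀ = bdist D x →
            bdist D x / C₁ ≤ bdist D (f x) ∧
            bdist D (f x) ≤ dist (f x) (f x₀) ∧
            dist (f x) (f x₀) ≤ C₁ * bdist D x := by
  have hC0 : 0 < C := by linarith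
  -- `η s` is strictly smaller than `1 / C`, as needed for the lower bound
  obtain ⟨s, hs0, hs⟩ := hη.surj (show 1 / (2 * C) ∈ Set.Ici (0 : ℝ) from
    Set.mem_Ici.2 (by positivity))
  have hspos : 0 < s := by
    rcases (Set.mem_Ici.1 hs0).lt_or_eq with h | h
    · exact h
    · rw [← h, hη.zero] at hs
      have : 0 < 1 / (2 * C) := by positivity
      linarith
  have hηC : 0 ≤ η C := by
    rw [← hη.zero]
    exact hη.mono.monotoneOn (Set.mem_Ici.2 le_rfl) (Set.mem_Ici.2 hC0.le) hC0.le
  refine ⟨max 1 (max (η C) (1 / s)), le_max_left _ _, ?_⟩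
  intro n D hD _ _ hP f hf hQ hid x hx x₀ hx₀ hd
  set C₁ := max 1 (max (η C) (1 / s)) with hC₁
  have hC₁1 : 1 ≤ C₁ := le_max_left _ _
  have hC₁η : η C ≤ C₁ := (le_max_left _ _).trans (le_max_right _ _)
  have hC₁s : 1 / s ≤ C₁ := (le_max_right _ _).trans (le_max_right _ _)
  have hfix : ∀ z ∈ frontier D, f z = z := fun z hz => hid hz
  have hcl : ∀ z ∈ frontier D, z ∈ closure D := fun z hz => frontier_subset_closure hz
  have hxc : x ∈ closure D := subset_closure hx
  refine ⟨?_, ?_, ?_⟩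
  · have hfx : f x ∈ D := by
      by_contra h
      have hfr : f x ∈ frontier D := by
        rw [hD.frontier_eq]
        exact ⟨hf.1.mapsTo hxc, h⟩
      have he : f x = x := hf.1.injOn (hcl _ hfr) hxc (hfix _ hfr)
      exact h (he.symm ▸ hx)
    obtain ⟨p, hp, hpd⟩ := isClosed_frontier.exists_infDist_eq_dist ⟨x₀, hx₀⟩ (f x)
    obtain ⟨w, hw, hw1, hw2⟩ := exists_frontier_comparable hD hP hfx hp
    have hpos : 0 < dist (f x) p := dist_nonneg.trans_lt hw1
    have hlt : s * dist p x < dist p w := by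
      by_contra! h
      have h1 := hQ s hspos p (hcl p hp) w (hcl w hw) x hxc h
      rw [hfix p hp, hfix w hw, hs, dist_comm p (f x)] at h1
      have h2 : dist (f x) p / C ≤ 1 / (2 * C) * dist (f x) p := hw2.trans h1
      have h3 : dist (f x) p / C = 2 * (1 / (2 * C) * dist (f x) p) := by field_simp
      have h4 : 0 < 1 / (2 * C) * dist (f x) p := by positivity
      linarith
    have h5 : bdist D x ≤ dist p x := by
      rw [dist_comm]
      exact Metric.infDist_le_dist_of_mem hp
    rw [div_le_iff₀ (by linarith), show bdist D (f x) = dist (f x) p from hpd]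
    calc bdist D x ≤ dist p x := h5
      _ ≤ dist (f x) p * (1 / s) := by
        rw [mul_one_div, le_div_iff₀ hspos]
        linarith
      _ ≤ dist (f x) p * C₁ := by gcongr
  · rw [hfix x₀ hx₀]
    exact Metric.infDist_le_dist_of_mem hx₀
  · obtain ⟨w, hw, hw1, hw2⟩ := exists_frontier_comparable hD hP hx hx₀
    rw [← hd]
    have h1 := hQ C hC0 x₀ (hcl _ hx₀) x hxc w (hcl w hw) (by
      rw [dist_comm x₀ x]
      rwa [div_le_iff₀' hC0] at hw2)
    rw [hfix w hw] at h1
    nth_rewrite 2 [hfix x₀ hx₀] at h1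
    rw [dist_comm (f x)]
    calc dist (f x₀) (f x) ≤ η C * dist x₀ w := h1
      _ ≤ C₁ * dist x x₀ := by gcongr

end
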